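/- The positive Munchausen numbers in base 9 are exactly 1, 28, 96446 and 923362; that is, for n ≥ 1, n = P_9(n) if and only if n ∈ {1, 28, 96446, 923362}. -/

import Mathlib

/-- Digit power sum: `P b n = Σ cᵢ^cᵢ` over the base-`b` digits of `n`, with `0^0 = 1`. -/
def P (b n : ℕ) : ℕ := ((Nat.digits b n).map (fun c => c ^ c)).sum

/-- Fuelled comparison: is the base-9 digit power sum of `n`, plus `acc`, equal to `s`? -/
def tst (s : ℕ) : ℕ → ℕ → ℕ → Bool
  | 0, _, _ => true
  | f + 1, n, acc => bif Nat.beq n 0 then Nat.beq acc s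
      else tst s f (n / 9) (acc + (n % 9) ^ (n % 9))

def good (s : ℕ) : Bool :=
  bif tst s 10 s 0 then
    Nat.beq s 0 || Nat.beq s 1 || Nat.beq s 28 || Nat.beq s 96446 || Nat.beq s 923362
  else true

/-- Run through all sums `s + Σ jᵥ v` with `Σ jᵥ ≤ k`. -/
def chk : List ℕ → ℕ → ℕ → Bool
  | [], _, s => good s
  | v :: vs, k, s => Nat.rec (motive := fun _ => ℕ → Bool) (fun s => chk vs 0 s)
      (fun k ih s => chk vs (k + 1) s && ih (s + v)) k s

theorem chk_zero (v : ℕ) (vs : List ℕ) (s : ℕ) : chk (v :: vs) 0 s = chk vs 0 s := rfl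

theorem chk_succ (v : ℕ) (vs : List ℕ) (k s : ℕ) :
    chk (v :: vs) (k + 1) s = (chk vs (k + 1) s && chk (v :: vs) k (s + v)) := rfl

theorem chk_cons (v : ℕ) (vs : List ℕ) (j k s : ℕ) (h : chk (v :: vs) (j + k) s = true) :
    chk vs k (s + j * v) = true := by
  induction j generalizing s with
  | zero =>
    rw [Nat.zero_add] at h
    cases k with
    | zero => simpa [chk_zero] using h
    | succ k =>
      rw [chk_succ, Bool.and_eq_true] at h
      simpa using h.1
  | succ j ih =>
    rw [show j + 1 + k = (j + k) + 1 by ring, chk_succ, Bool.and_eq_true] at h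
    have := ih _ h.2
    rwa [show s + (j + 1) * v = s + v + j * v by ring]

theorem sum_split (v : ℕ) (l : List ℕ) :
    ∃ j l', l.sum = j * v + List.sum l' ∧ l.length = j + l'.length ∧
      ∀ x, x ∈ l' → x ∈ l ∧ x ≠ v := by
  induction l with
  | nil => exact ⟨0, [], by simp⟩
  | cons a l ih =>
    obtain ⟨j, l', h1, h2, h3⟩ := ih
    by_cases h : a = v
    · refine ⟨j + 1, l', ?_, ?_, ?_⟩
      · rw [List.sum_cons, h1, h]; ring
      · rw [List.length_cons, h2]; ring
      · intro x hx
        exact ⟨List.mem_cons_of_mem _ (h3 x hx).1, (h3 x hx).2⟩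
    · refine ⟨j, a :: l', ?_, ?_, ?_⟩
      · rw [List.sum_cons, List.sum_cons, h1]; ring
      · rw [List.length_cons, List.length_cons, h2]; ring
      · intro x hx
        rcases List.mem_cons.1 hx with rfl | hx
        · exact ⟨List.mem_cons_self, h⟩
        · exact ⟨List.mem_cons_of_mem _ (h3 x hx).1, (h3 x hx).2⟩

theorem chk_sound (vs : List ℕ) : ∀ (k s : ℕ), chk vs k s = true → ∀ l : List ℕ,
    (∀ x ∈ l, x ∈ vs) → l.length ≤ k → good (s + l.sum) = true := by
  induction vs with
  | nil =>
    intro k s h l hl _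
    have : l = [] := List.eq_nil_iff_forall_not_mem.2 fun x hx => by simpa using hl x hx
    subst this
    simpa [chk] using h
  | cons v vs ih =>
    intro k s h l hl hk
    obtain ⟨j, l', h1, h2, h3⟩ := sum_split v l
    obtain ⟨r, rfl⟩ := Nat.exists_eq_add_of_le (show j ≤ k by omega)
    have := ih r _ (chk_cons v vs j r s h) l' (fun x hx => by
      rcases List.mem_cons.1 (hl x (h3 x hx).1) with h4 | h4
      · exact absurd h4 (h3 x hx).2
      · exact h4) (by omega)
    rwa [h1, ← Nat.add_assoc]

theorem chk_all : chk [16777216, 823543, 46656, 3125, 256, 27, 4, 1] 9 0 = true := by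
  decide +kernel

theorem P_step (n : ℕ) (hn : n ≠ 0) : P 9 n = (n % 9) ^ (n % 9) + P 9 (n / 9) := by
  unfold P
  rw [Nat.digits_def' (by norm_num) (Nat.pos_of_ne_zero hn)]
  simp

theorem tst_true (s f n acc : ℕ) (h : acc + P 9 n = s) : tst s f n acc = true := by
  induction f generalizing n acc with
  | zero => rfl
  | succ f ih =>
    by_cases h0 : n = 0
    · subst h0
      simp only [P, Nat.digits_zero, List.map_nil, List.sum_nil] at h
      simp [tst, ← h]
    · have hb : Nat.beq n 0 = false := by
        rw [← Bool.not_eq_true, Nat.beq_eq]; exact h0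
      rw [tst, hb, cond_false]
      apply ih
      rw [← h, P_step n h0]; ring

theorem munchausen_base9 (n : ℕ) (hn : 1 ≤ n) :
    n = P 9 n ↔ n ∈ ({1, 28, 96446, 923362} : Set ℕ) := by
  constructor
  · intro h
    have hd : ∀ x ∈ (Nat.digits 9 n).map (fun c => c ^ c),
        x ∈ [16777216, 823543, 46656, 3125, 256, 27, 4, 1] := by
      intro x hx
      obtain ⟨c, hc, rfl⟩ := List.mem_map.1 hx
      have : c < 9 := Nat.digits_lt_base (by norm_num) hc
      interval_cases c <;> simp
    have hle : P 9 n ≤ (Nat.digits 9 n).length * 16777216 := by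
      have := List.sum_le_card_nsmul ((Nat.digits 9 n).map (fun c => c ^ c)) 16777216
        (fun x hx => by
          have := hd x hx
          simp only [List.mem_cons, List.not_mem_nil, or_false] at this
          omega)
      simpa [P] using this
    have hlen : (Nat.digits 9 n).length ≤ 9 := by
      by_contra hc
      have h1 := Nat.base_pow_length_digits_le 9 n (by norm_num) (by omega)
      have h2 : ∀ m, 10 ≤ m → 9 * (m * 16777216) < 9 ^ m := by
        intro m hm
        induction m, hm using Nat.le_induction with
        | base => norm_num
        | succ m hm ih =>
          have h3 : 9 ^ (m + 1) = 9 ^ m * 9 := pow_succ 9 m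
          linarith
      have := h2 _ (show 10 ≤ (Nat.digits 9 n).length by omega)
      omega
    have hl : ((Nat.digits 9 n).map (fun c => c ^ c)).length ≤ 9 := by
      rw [List.length_map]; exact hlen
    have hg := chk_sound _ 9 0 chk_all _ hd hl
    have hg' : good n = true := by
      rw [Nat.zero_add] at hg
      have : ((Nat.digits 9 n).map (fun c => c ^ c)).sum = n := h.symm
      rwa [this] at hg
    rw [good, tst_true n 10 n 0 (by omega), cond_true] at hg'
    simp only [Bool.or_eq_true, Nat.beq_eq] at hg'
    simp only [Set.mem_insert_iff, Set.mem_singleton_iff]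
    omega
  · intro h
    simp only [Set.mem_insert_iff, Set.mem_singleton_iff] at h
    rcases h with rfl | rfl | rfl | rfl <;> simp [P]
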